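/- Adaptive fast gradient method with an inexact model (uniform constant). Under the hypotheses of the general bound for the adaptive fast gradient method, assume additionally that there is a constant L > 0 with L_{k+1} ≤ 2L for all 0 ≤ k ≤ N−1 (as is guaranteed when a (δ_k, L, ‖·‖)-model of f exists at every y_{k+1} and L_0 ≤ 2L). Then A_N ≥ (N+1)²/(8L) and f(x_N) − f(x_*) ≤ 8LR²/(N+1)² + 8L (Σ_{k=0}^{N-1} δ̃_k)/(N+1)² + (2 Σ_{k=0}^{N-1} δ_k A_{k+1})/A_N, where V[x_0](x_*) ≤ R². -/

import Mathlib

open Finset RealInnerProductSpace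

/-!
The potential `A k * (f (x k) - f xstar) + V (u k) xstar` grows in step `k` by at most
`δt k + 2 * δ k * A (k + 1)`.  Two facts about the prox-function carry this. Inexact optimality of
`u (k + 1)` together with convexity of the model gives a three-point inequality for `V`
(`three_point_of_inexact_min`), and 1-strong convexity of `d` gives `nrm (z - p) ^ 2 / 2 ≤ V p z`
(`half_sq_le_bregman`). The second absorbs the quadratic error of the descent condition, because
`x (k + 1) - y (k + 1) = (α (k + 1) / A (k + 1)) • (u (k + 1) - u k)` and
`A (k + 1) = L (k + 1) * α (k + 1) ^ 2`. Both are obtained from one-sided directional derivatives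
of `d` along segments of `Q`.

The growth of `A` comes from `A (k + 1) - A k = √(A (k + 1) / L (k + 1))`, which forces
`√(A (k + 1)) ≥ √(A k) + 1 / √(8 * Lu)` (`add_one_le_sqrt_step`); the first step
`A 1 = 1 / L 1 ≥ 4 / (8 * Lu)` accounts for the `N + 1` in place of `N`.
-/

namespace AdaptiveFastGradient

open Filter Topology

variable {F : Type*} [NormedAddCommGroup F] [InnerProductSpace ℝ F] [CompleteSpace F]

/-- The one-sided directional derivative of `d` along a segment of `Q`. -/
lemma tendsto_segment_slope {Q : Set F} (hQ : Convex ℝ Q) {d : F → ℝ} {g p q : F}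
    (hd : HasGradientWithinAt d g Q p) (hp : p ∈ Q) (hq : q ∈ Q) :
    Tendsto (fun t : ℝ => t⁻¹ * (d (p + t • (q - p)) - d p)) (𝓝[>] 0) (𝓝 ⟪g, q - p⟫) := by
  have hline : HasDerivWithinAt (fun t : ℝ => p + t • (q - p)) (q - p) (Set.Ioo 0 1) 0 := by
    have h := ((hasDerivAt_id (0 : ℝ)).smul_const (q - p)).const_add p
    simpa using h.hasDerivWithinAt
  have hmaps : Set.MapsTo (fun t : ℝ => p + t • (q - p)) (Set.Ioo 0 1) Q := fun t ht =>
    hQ.add_smul_sub_mem hp hq ⟨ht.1.le, ht.2.le⟩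
  have hd' : HasFDerivWithinAt d (InnerProductSpace.toDual ℝ F g) Q
      ((fun t : ℝ => p + t • (q - p)) 0) := by
    simpa using hd.hasFDerivWithinAt
  have h := hd'.comp_hasDerivWithinAt (0 : ℝ) hline hmaps
  rw [hasDerivWithinAt_iff_tendsto_slope' (by simp)] at h
  rw [nhdsWithin_Ioo_eq_nhdsGT one_pos] at h
  refine (h.congr fun t => ?_).trans (by simp)
  simp [slope]

lemma eventually_mem_Ioo : ∀ᶠ t : ℝ in 𝓝[>] 0, t ∈ Set.Ioo (0 : ℝ) 1 :=
  Ioo_mem_nhdsGT one_pos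

lemma half_sq_le_bregman {Q : Set F} (hQ : Convex ℝ Q) {d : F → ℝ} {g p z : F} {nrm : F → ℝ}
    (hd : HasGradientWithinAt d g Q p) (hp : p ∈ Q) (hz : z ∈ Q)
    (hstrong : ∀ t : ℝ, t ∈ Set.Icc (0 : ℝ) 1 → d (t • z + (1 - t) • p) ≤
        t * d z + (1 - t) * d p - t * (1 - t) / 2 * nrm (z - p) ^ 2) :
    nrm (z - p) ^ 2 / 2 ≤ d z - d p - ⟪g, z - p⟫ := by
  have h1 := tendsto_segment_slope hQ hd hp hz
  have h2 : Tendsto (fun t : ℝ => d z - d p - (1 - t) / 2 * nrm (z - p) ^ 2) (𝓝[>] 0)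
      (𝓝 (d z - d p - (1 - 0) / 2 * nrm (z - p) ^ 2)) :=
    (Continuous.tendsto (by fun_prop) 0).mono_left nhdsWithin_le_nhds
  have h3 := le_of_tendsto_of_tendsto h1 h2 (by
    filter_upwards [eventually_mem_Ioo] with t ht
    have hs := hstrong t ⟨ht.1.le, ht.2.le⟩
    have he : t • z + (1 - t) • p = p + t • (z - p) := by module
    rw [he] at hs
    rw [inv_mul_le_iff₀ ht.1]
    linarith)
  linarith

/-- The three-point inequality at an inexact minimizer `v` of `φ = V[p] + a ψ`, whose subgradient
`h` has the inexact optimality property. Only a subgradient of the sum `φ` is given; the one of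
`a ψ` is recovered by differentiating `d` at `v` in the direction `z - v`. -/
lemma three_point_of_inexact_min {Q : Set F} (hQ : Convex ℝ Q) {d ψ : F → ℝ} {gp gv p v z h : F}
    {a ε : ℝ} (ha : 0 ≤ a) (hd : HasGradientWithinAt d gv Q v) (hψ : ConvexOn ℝ Q ψ)
    (hv : v ∈ Q) (hz : z ∈ Q)
    (hsub : ∀ w ∈ Q, d w - d p - ⟪gp, w - p⟫ + a * ψ w ≥
      d v - d p - ⟪gp, v - p⟫ + a * ψ v + ⟪h, w - v⟫)
    (hε : ⟪h, z - v⟫ ≥ -ε) :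
    a * ψ v + (d v - d p - ⟪gp, v - p⟫) + (d z - d v - ⟪gv, z - v⟫) ≤
      a * ψ z + (d z - d p - ⟪gp, z - p⟫) + ε := by
  have h1 := tendsto_segment_slope hQ hd hv hz
  have h2 := ge_of_tendsto (b := ⟪h, z - v⟫ + ⟪gp, z - v⟫ - a * (ψ z - ψ v)) h1 (by
    filter_upwards [eventually_mem_Ioo] with t ht
    have hs := hsub _ (hQ.add_smul_sub_mem hv hz ⟨ht.1.le, ht.2.le⟩)
    have hc := hψ.2 hv hz (sub_nonneg.2 ht.2.le) ht.1.le (by ring)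
    have he : (1 - t) • v + t • z = v + t • (z - v) := by module
    rw [he, smul_eq_mul, smul_eq_mul] at hc
    have hc' := mul_le_mul_of_nonneg_left hc ha
    have e1 : v + t • (z - v) - p = (v - p) + t • (z - v) := by abel
    rw [e1, add_sub_cancel_left, inner_add_right, inner_smul_right, inner_smul_right] at hs
    rw [le_inv_mul_iff₀ ht.1]
    linarith)
  have e2 : z - p = (v - p) + (z - v) := by abel
  rw [e2, inner_add_right]
  linarith

/-- The largest root of `a + α = L α²` is positive. -/
lemma largest_root_pos {a L α : ℝ} (ha : 0 ≤ a) (hL : 0 < L)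
    (hmax : ∀ β : ℝ, a + β = L * β ^ 2 → β ≤ α) : 0 < α := by
  have hs := Real.sq_sqrt (show 0 ≤ 1 + 4 * L * a by positivity)
  refine lt_of_lt_of_le ?_ (hmax ((1 + √(1 + 4 * L * a)) / (2 * L)) ?_)
  · positivity
  · generalize √(1 + 4 * L * a) = s at hs ⊢
    field_simp
    linarith

/-- One step of the growth of `A`: with `a = A k` and `b = A (k + 1)`, the quantity `√(8 L A)`
increases by at least one. -/
lemma add_one_le_sqrt_step {a b α l Lu : ℝ} (ha : 0 ≤ a) (hα : 0 < α) (hb : b = a + α)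
    (hroot : b = l * α ^ 2) (hl : l ≤ 2 * Lu) (hLu : 0 < Lu) :
    √(8 * Lu * a) + 1 ≤ √(8 * Lu * b) := by
  have hb0 : 0 < b := by linarith
  set s := √(8 * Lu * a)
  set r := √(8 * Lu * b)
  have hs : s ^ 2 = 8 * Lu * a := Real.sq_sqrt (by positivity)
  have hr : r ^ 2 = 8 * Lu * b := Real.sq_sqrt (by positivity)
  have hr0 : 0 < r := Real.sqrt_pos.2 (by positivity)
  have hsr : s ≤ r := Real.sqrt_le_sqrt (by nlinarith)
  have hrα : r ≤ 4 * Lu * α := by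
    refine abs_le_of_sq_le_sq' ?_ (by positivity) |>.2
    rw [hr, hroot]
    have := mul_le_mul_of_nonneg_right hl (show 0 ≤ 8 * Lu * α ^ 2 by positivity)
    linarith
  -- `(r - s) (r + s) = 8 Lu α ≥ 2 r ≥ r + s`
  have hdiff : r ^ 2 - s ^ 2 = 8 * Lu * α := by rw [hs, hr, hb]; ring
  by_contra! hcon
  nlinarith [Real.sqrt_nonneg (8 * Lu * a)]

end AdaptiveFastGradient

open AdaptiveFastGradient

/-- **Adaptive fast gradient method with an inexact model (uniform constant).**
`ψ k` is the model `ψ_{δ_k}(·, y_{k+1})` with value `fδ k = f_{δ_k}(y_{k+1})`. -/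
theorem adaptive_fast_gradient_method_uniform_constant
    {n : ℕ} (Q : Set (EuclideanSpace ℝ (Fin n)))
    (hQne : Q.Nonempty) (hQclosed : IsClosed Q) (hQconv : Convex ℝ Q)
    (f : EuclideanSpace ℝ (Fin n) → ℝ) (hfconv : ConvexOn ℝ Q f)
    -- a general norm `nrm` on `ℝⁿ`
    (nrm : EuclideanSpace ℝ (Fin n) → ℝ)
    (hnrm_zero : ∀ z, nrm z = 0 ↔ z = 0)
    (hnrm_smul : ∀ (c : ℝ) z, nrm (c • z) = |c| * nrm z)
    (hnrm_add : ∀ z w, nrm (z + w) ≤ nrm z + nrm w)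
    -- the prox-function `d`, continuously differentiable and 1-strongly convex w.r.t. `nrm`
    (d : EuclideanSpace ℝ (Fin n) → ℝ)
    (Dd : EuclideanSpace ℝ (Fin n) → EuclideanSpace ℝ (Fin n))
    (hd_diff : ∀ z ∈ Q, HasGradientWithinAt d (Dd z) Q z)
    (hd_cont : ContinuousOn Dd Q)
    (hd_strong : ∀ z ∈ Q, ∀ w ∈ Q, ∀ t : ℝ, t ∈ Set.Icc (0 : ℝ) 1 →
      d (t • z + (1 - t) • w) ≤
        t * d z + (1 - t) * d w - t * (1 - t) / 2 * nrm (z - w) ^ 2)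
    -- Bregman divergence
    (V : EuclideanSpace ℝ (Fin n) → EuclideanSpace ℝ (Fin n) → ℝ)
    (hV : ∀ y z, V y z = d z - d y - ⟪Dd y, z - y⟫)
    -- the method data
    (N : ℕ) (hN : 0 < N)
    (x y u : ℕ → EuclideanSpace ℝ (Fin n))
    (hxQ : ∀ k, x k ∈ Q) (hyQ : ∀ k, y k ∈ Q) (huQ : ∀ k, u k ∈ Q)
    (hinit : y 0 = x 0 ∧ u 0 = x 0)
    (δ δt : ℕ → ℝ) (hδ : ∀ k, 0 ≤ δ k) (hδt : ∀ k, 0 ≤ δt k)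
    (L : ℕ → ℝ) (hL : ∀ k, 0 < L (k + 1))
    (α A : ℕ → ℝ) (hα0 : α 0 = 0) (hA0 : A 0 = 0)
    -- `α_{k+1}` is the largest root of `A_k + α = L_{k+1} α²`
    (hαroot : ∀ k, A k + α (k + 1) = L (k + 1) * α (k + 1) ^ 2 ∧
      ∀ β : ℝ, A k + β = L (k + 1) * β ^ 2 → β ≤ α (k + 1))
    (hArec : ∀ k, A (k + 1) = A k + α (k + 1))
    (hy : ∀ k, y (k + 1) = (A (k + 1))⁻¹ • (α (k + 1) • u k + A k • x k))
    -- `ψ k = ψ_{δ_k}(·, y_{k+1})` with value `fδ k = f_{δ_k}(y_{k+1})`: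
    -- a `(δ_k, L̄_{k+1}, nrm)`-model of `f` at `y_{k+1}` for some `L̄_{k+1} > 0`
    (ψ : ℕ → EuclideanSpace ℝ (Fin n) → ℝ) (fδ : ℕ → ℝ)
    (hmodel : ∀ k, ∃ Lbar : ℝ, 0 < Lbar ∧
      ConvexOn ℝ Q (ψ k) ∧ ψ k (y (k + 1)) = 0 ∧
      ∀ z ∈ Q, 0 ≤ f z - (fδ k + ψ k z) ∧
        f z - (fδ k + ψ k z) ≤ Lbar / 2 * nrm (z - y (k + 1)) ^ 2 + δ k)
    -- the value of the model at the next iterate (`f_{δ_k}(x_{k+1})`)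
    (fδnext : ℕ → ℝ)
    (hfδnext : ∀ k, 0 ≤ f (x (k + 1)) - fδnext k ∧
      f (x (k + 1)) - fδnext k ≤ δ k)
    -- descent condition
    (hdescent : ∀ k, fδnext k ≤ fδ k + ψ k (x (k + 1)) +
      L (k + 1) / 2 * nrm (x (k + 1) - y (k + 1)) ^ 2 + δ k)
    -- `u_{k+1}` is a `δ̃_k`-inexact minimizer of `φ_{k+1}(z) = V (u k) z + α_{k+1} ψ k z` on `Q`
    (hmin : ∀ k, ∃ h : EuclideanSpace ℝ (Fin n),
      (∀ z ∈ Q, V (u k) z + α (k + 1) * ψ k z ≥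
        V (u k) (u (k + 1)) + α (k + 1) * ψ k (u (k + 1)) + ⟪h, z - u (k + 1)⟫) ∧
      (∀ z ∈ Q, ⟪h, z - u (k + 1)⟫ ≥ -δt k))
    (hx : ∀ k, x (k + 1) = (A (k + 1))⁻¹ • (α (k + 1) • u (k + 1) + A k • x k))
    -- the optimum
    (xstar : EuclideanSpace ℝ (Fin n)) (hxstarQ : xstar ∈ Q)
    (hxstar : ∀ z ∈ Q, f xstar ≤ f z)
    (R : ℝ) (hR : V (x 0) xstar ≤ R ^ 2)
    -- uniform bound on the adaptive constants
    (Lu : ℝ) (hLu : 0 < Lu) (hLuniform : ∀ k < N, L (k + 1) ≤ 2 * Lu) :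
    A N ≥ (N + 1) ^ 2 / (8 * Lu) ∧
    f (x N) - f xstar ≤
      8 * Lu * R ^ 2 / (N + 1) ^ 2 + 8 * Lu * (∑ k ∈ range N, δt k) / (N + 1) ^ 2 +
        (2 * ∑ k ∈ range N, δ k * A (k + 1)) / A N := by
  have hAα : ∀ k, 0 ≤ A k ∧ 0 < α (k + 1) := by
    intro k
    induction k with
    | zero => exact ⟨hA0.ge, largest_root_pos hA0.ge (hL 0) (hαroot 0).2⟩
    | succ k ih =>
      have h : 0 ≤ A (k + 1) := by rw [hArec]; linarith [ih.1, ih.2]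
      exact ⟨h, largest_root_pos h (hL _) (hαroot _).2⟩
  have hApos : ∀ k, 0 < A (k + 1) := fun k => by
    rw [hArec]; linarith [(hAα k).1, (hAα k).2]
  have hAL : ∀ k, A (k + 1) = L (k + 1) * α (k + 1) ^ 2 := fun k => by
    rw [hArec]; exact (hαroot k).1
  have hgrow : ∀ k, k < N → (k : ℝ) + 2 ≤ √(8 * Lu * A (k + 1)) := by
    intro k
    induction k with
    | zero =>
      intro hk
      -- the first step gains two units, since `α 1 = A 1` and hence `L 1 * A 1 = 1`
      have h1 := hAL 0
      have h2 : A (0 + 1) = α (0 + 1) := by rw [hArec, hA0, zero_add]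
      have h3 : L (0 + 1) * A (0 + 1) = 1 := by
        have := hApos 0
        rw [← h2] at h1
        nlinarith
      refine Real.le_sqrt_of_sq_le ?_
      have := mul_le_mul_of_nonneg_right (hLuniform 0 hk) (hApos 0).le
      norm_num at *
      linarith
    | succ k ih =>
      intro hk
      have h1 := add_one_le_sqrt_step (hAα (k + 1)).1 (hAα (k + 1)).2 (hArec _) (hAL _)
        (hLuniform _ hk) hLu
      have h2 := ih (by omega)
      push_cast
      linarith
  have hAN : ((N : ℝ) + 1) ^ 2 ≤ 8 * Lu * A N := by
    obtain ⟨m, rfl⟩ : ∃ m, N = m + 1 := ⟨N - 1, by omega⟩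
    have h1 := hgrow m (by omega)
    have h2 := Real.sq_sqrt (show 0 ≤ 8 * Lu * A (m + 1) by have := hApos m; positivity)
    rw [← h2]
    refine pow_le_pow_left₀ (by positivity) ?_ 2
    push_cast
    linarith
  have hANpos : 0 < A N := by
    obtain ⟨m, rfl⟩ : ∃ m, N = m + 1 := ⟨N - 1, by omega⟩
    exact hApos m
  have hVlow : ∀ p ∈ Q, ∀ z ∈ Q, nrm (z - p) ^ 2 / 2 ≤ V p z := fun p hp z hz => by
    rw [hV]
    exact half_sq_le_bregman hQconv (hd_diff p hp) hp hz (hd_strong z hz p hp)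
  have hstep : ∀ k, A (k + 1) * (f (x (k + 1)) - f xstar) + V (u (k + 1)) xstar ≤
      A k * (f (x k) - f xstar) + V (u k) xstar + δt k + 2 * (δ k * A (k + 1)) := by
    intro k
    obtain ⟨Lbar, -, hψ, -, hmod⟩ := hmodel k
    obtain ⟨h, hsub, hε⟩ := hmin k
    have hAk := (hAα k).1
    have hαk := (hAα k).2
    have hA1 := hApos k
    simp only [hV (u k)] at hsub
    have h3 := three_point_of_inexact_min hQconv hαk.le (hd_diff _ (huQ (k + 1))) hψ
      (huQ (k + 1)) hxstarQ hsub (hε _ hxstarQ)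
    rw [← hV, ← hV, ← hV] at h3
    have hψx : A (k + 1) * ψ k (x (k + 1)) ≤ α (k + 1) * ψ k (u (k + 1)) + A k * ψ k (x k) := by
      have hc := hψ.2 (huQ (k + 1)) (hxQ k) (div_nonneg hαk.le hA1.le) (div_nonneg hAk hA1.le)
        (by rw [← add_div, div_eq_one_iff_eq hA1.ne', hArec]; ring)
      have he : (α (k + 1) / A (k + 1)) • u (k + 1) + (A k / A (k + 1)) • x k = x (k + 1) := by
        rw [hx, smul_add, smul_smul, smul_smul, div_eq_inv_mul, div_eq_inv_mul]
      rw [he, smul_eq_mul, smul_eq_mul] at hc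
      have := mul_le_mul_of_nonneg_left hc hA1.le
      calc _ ≤ _ := this
        _ = _ := by field_simp
    have hquad : A (k + 1) * (L (k + 1) / 2 * nrm (x (k + 1) - y (k + 1)) ^ 2) =
        nrm (u (k + 1) - u k) ^ 2 / 2 := by
      have he : x (k + 1) - y (k + 1) = (α (k + 1) / A (k + 1)) • (u (k + 1) - u k) := by
        rw [hx, hy, ← smul_sub, add_sub_add_right_eq_sub, ← smul_sub, smul_smul, div_eq_inv_mul]
      have hLe : L (k + 1) = A (k + 1) / α (k + 1) ^ 2 := by
        rw [hAL k]; field_simp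
      rw [he, hnrm_smul, mul_pow, sq_abs, hLe]
      field_simp
    have hVu := hVlow _ (huQ k) _ (huQ (k + 1))
    have hdesc := mul_le_mul_of_nonneg_left
      (show f (x (k + 1)) ≤ fδ k + ψ k (x (k + 1)) +
        L (k + 1) / 2 * nrm (x (k + 1) - y (k + 1)) ^ 2 + 2 * δ k by
        linarith [(hfδnext k).2, hdescent k]) hA1.le
    have hmx := mul_le_mul_of_nonneg_left (hmod _ (hxQ k)).1 hAk
    have hms := mul_le_mul_of_nonneg_left (hmod _ hxstarQ).1 hαk.le
    have hfδ : A (k + 1) * fδ k = A k * fδ k + α (k + 1) * fδ k := by rw [hArec]; ring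
    have hfs : A (k + 1) * f xstar = A k * f xstar + α (k + 1) * f xstar := by rw [hArec]; ring
    linarith
  have hsum : ∀ m, A m * (f (x m) - f xstar) + V (u m) xstar ≤
      V (x 0) xstar + ∑ k ∈ range m, δt k + 2 * ∑ k ∈ range m, δ k * A (k + 1) := by
    intro m
    induction m with
    | zero => simp [hA0, hinit.2]
    | succ m ih =>
      rw [sum_range_succ, sum_range_succ]
      linarith [hstep m]
  refine ⟨?_, ?_⟩
  · rw [ge_iff_le, div_le_iff₀ (by positivity)]
    linarith
  · have hVN : 0 ≤ V (u N) xstar := le_trans (by positivity) (hVlow _ (huQ N) _ hxstarQ)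
    have hS : 0 ≤ ∑ k ∈ range N, δt k := sum_nonneg fun k _ => hδt k
    have hmain : f (x N) - f xstar ≤
        (R ^ 2 + ∑ k ∈ range N, δt k) / A N + (2 * ∑ k ∈ range N, δ k * A (k + 1)) / A N := by
      rw [← add_div, le_div_iff₀ hANpos]
      linarith [hsum N]
    have hrate : (R ^ 2 + ∑ k ∈ range N, δt k) / A N ≤
        8 * Lu * R ^ 2 / (N + 1) ^ 2 + 8 * Lu * (∑ k ∈ range N, δt k) / (N + 1) ^ 2 := by
      rw [← add_div, div_le_div_iff₀ hANpos (by positivity)]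
      have := mul_le_mul_of_nonneg_left hAN (add_nonneg (sq_nonneg R) hS)
      linarith
    linarith
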